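/- (Proposition 1, part (a)) For all a, a' ∈ A with ρ_{a'} < 1, the Green's function of A ∪ B satisfies G_A(a,a') ≤ G_{A∪B}(a,a') ≤ G_A(a,a') + (ρ_a / (1 − ρ_{a'})) · G_A(a',a'). -/

import Mathlib

open MeasureTheory ENNReal

/-- The first hitting time of the set `D` along the path `s`, valued in `ℕ∞`
(`⊤` if the path never visits `D`). -/
noncomputable def hitTime {Ω : Type*} (D : Set Ω) (s : ℕ → Ω) : ℕ∞ :=
  ⨅ (k : ℕ) (_ : s k ∈ D), (k : ℕ∞)

/-- The path of the walk started at `x` with steps `ξ` : `S_n = x + ∑_{j<n} ξ j`. -/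
def walk {Ω : Type*} [AddCommGroup Ω] (x : Ω) (ξ : ℕ → Ω) (n : ℕ) : Ω :=
  x + ∑ j ∈ Finset.range n, ξ j

/-- A random walk on a group `Ω`, described by the common law `ν` of its i.i.d.
steps together with the joint law `μ` of the step sequence (characterized on
cylinder sets as the product of `ν`'s). -/
structure RandomWalk (Ω : Type*) [AddCommGroup Ω] [MeasurableSpace Ω] where
  ν : Measure Ω
  probν : IsProbabilityMeasure ν
  μ : Measure (ℕ → Ω)
  probμ : IsProbabilityMeasure μ
  iid : ∀ (n : ℕ) (f : Fin n → Ω),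
    μ {ξ | ∀ i : Fin n, ξ (i : ℕ) = f i} = ∏ i : Fin n, ν {f i}

variable {Ω : Type*} [AddCommGroup Ω] [MeasurableSpace Ω]

/-- `P^x(θ)` : the probability that the path `(S_n)` of the walk started at `x`
has the property `θ`. -/
noncomputable def RandomWalk.P (W : RandomWalk Ω) (x : Ω) (θ : Set (ℕ → Ω)) : ℝ≥0∞ :=
  W.μ {ξ | walk x ξ ∈ θ}

/-- `E^x(T_D)` : the expected hitting time of `D` for the walk started at `x`. -/
noncomputable def RandomWalk.E (W : RandomWalk Ω) (x : Ω) (D : Set Ω) : ℝ≥0∞ :=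
  ∫⁻ ξ, (hitTime D (walk x ξ) : ℝ≥0∞) ∂W.μ

/-- The truncated Green's function `G_D(x,y) = ∑_{j≥0} P^x(S_j = y, j < T_{Dᶜ})`. -/
noncomputable def RandomWalk.G (W : RandomWalk Ω) (D : Set Ω) (x y : Ω) : ℝ≥0∞ :=
  ∑' j : ℕ, W.P x {s | s j = y ∧ (j : ℕ∞) < hitTime Dᶜ s}

/-- The hitting distribution `H_D(x,y) = P^x(S_{T_D} = y)`. -/
noncomputable def RandomWalk.H (W : RandomWalk Ω) (D : Set Ω) (x y : Ω) : ℝ≥0∞ :=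
  W.P x {s | ∃ k : ℕ, hitTime D s = (k : ℕ∞) ∧ s k = y}

section aux

def consSeq {Ω : Type*} (p : Ω × (ℕ → Ω)) : ℕ → Ω := fun n => Nat.casesOn n p.1 p.2

def cyls (Ω : Type*) : Set (Set (ℕ → Ω)) :=
  {S | ∃ (n : ℕ) (f : Fin n → Ω), S = {ξ | ∀ i : Fin n, ξ (i : ℕ) = f i}}

lemma cyls_pi (Ω : Type*) : IsPiSystem (cyls Ω) := by
  have key : ∀ (n : ℕ) (f : Fin n → Ω) (m : ℕ) (g : Fin m → Ω), n ≤ m →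
      ({ξ : ℕ → Ω | ∀ i : Fin n, ξ (i : ℕ) = f i} ∩ {ξ | ∀ i : Fin m, ξ (i : ℕ) = g i}).Nonempty →
      ({ξ : ℕ → Ω | ∀ i : Fin n, ξ (i : ℕ) = f i} ∩ {ξ | ∀ i : Fin m, ξ (i : ℕ) = g i})
        = {ξ | ∀ i : Fin m, ξ (i : ℕ) = g i} := by
    rintro n f m g hnm ⟨η, h1, h2⟩
    apply Set.inter_eq_right.2
    intro ξ hξ i
    have e1 := hξ ⟨i, by omega⟩
    have e2 := h2 ⟨i, by omega⟩
    have e3 := h1 i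
    simp only at e1 e2
    rw [e1, ← e2, e3]
  rintro _ ⟨n, f, rfl⟩ _ ⟨m, g, rfl⟩ hne
  rcases le_total n m with h | h
  · exact ⟨m, g, key n f m g h hne⟩
  · rw [Set.inter_comm] at hne ⊢
    exact ⟨n, f, key m g n f h hne⟩

lemma cyls_meas {Ω : Type*} [MeasurableSpace Ω] [MeasurableSingletonClass Ω]
    (n : ℕ) (f : Fin n → Ω) :
    MeasurableSet {ξ : ℕ → Ω | ∀ i : Fin n, ξ (i : ℕ) = f i} := by
  rw [Set.ofPred_forall]
  refine MeasurableSet.iInter fun i => ?_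
  have := measurable_pi_apply (X := fun _ : ℕ => Ω) (i : ℕ) (measurableSet_singleton (f i))
  exact this

lemma cyls_gen {Ω : Type*} [Countable Ω] [MeasurableSpace Ω] [MeasurableSingletonClass Ω] :
    (MeasurableSpace.pi : MeasurableSpace (ℕ → Ω)) = MeasurableSpace.generateFrom (cyls Ω) := by
  apply le_antisymm
  · refine iSup_le fun i => ?_
    rw [← measurable_iff_comap_le]
    refine @measurable_to_countable' _ _ _ _ (MeasurableSpace.generateFrom (cyls Ω)) _ ?_
    intro y
    have : (fun b : ℕ → Ω => b i) ⁻¹' {y} = ⋃ f : {f : Fin (i+1) → Ω // f (Fin.last i) = y},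
        {ξ : ℕ → Ω | ∀ k : Fin (i+1), ξ (k : ℕ) = f.1 k} := by
      ext ξ
      simp only [Set.mem_preimage, Set.mem_singleton_iff, Set.mem_iUnion, Set.mem_ofPred_eq]
      constructor
      · intro h
        exact ⟨⟨fun k => ξ k, by simpa using h⟩, fun k => rfl⟩
      · rintro ⟨⟨f, hf⟩, h⟩
        have := h (Fin.last i)
        simpa [hf] using this
    rw [this]
    exact MeasurableSet.iUnion fun f => MeasurableSpace.measurableSet_generateFrom ⟨_, _, rfl⟩
  · refine MeasurableSpace.generateFrom_le ?_
    rintro _ ⟨n, f, rfl⟩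
    exact cyls_meas n f

lemma consSeq_meas {Ω : Type*} [MeasurableSpace Ω] :
    Measurable (consSeq : Ω × (ℕ → Ω) → ℕ → Ω) := by
  refine measurable_pi_lambda _ fun n => ?_
  cases n with
  | zero => exact measurable_fst
  | succ n => exact (measurable_pi_apply n).comp measurable_snd

lemma law_cons {Ω : Type*} [AddCommGroup Ω] [Countable Ω] [MeasurableSpace Ω]
    [MeasurableSingletonClass Ω] (W : RandomWalk Ω) :
    W.μ = (W.ν.prod W.μ).map consSeq := by
  have := W.probν
  have := W.probμ
  have : IsProbabilityMeasure ((W.ν.prod W.μ).map consSeq) :=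
    Measure.isProbabilityMeasure_map consSeq_meas.aemeasurable
  refine ext_of_generate_finite (cyls Ω) cyls_gen (cyls_pi Ω) ?_ (by simp)
  rintro _ ⟨n, f, rfl⟩
  rw [Measure.map_apply consSeq_meas (cyls_meas n f), W.iid]
  cases n with
  | zero => simp
  | succ n =>
    have : (consSeq ⁻¹' {ξ : ℕ → Ω | ∀ i : Fin (n+1), ξ (i : ℕ) = f i})
        = {f 0} ×ˢ {ξ : ℕ → Ω | ∀ i : Fin n, ξ (i : ℕ) = f i.succ} := by
      ext ⟨z, ξ⟩
      simp [Fin.forall_fin_succ, consSeq]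
    rw [this, Measure.prod_prod, W.iid, Fin.prod_univ_succ]

lemma walk_meas {Ω : Type*} [AddCommGroup Ω] [Countable Ω] [MeasurableSpace Ω]
    [MeasurableSingletonClass Ω] (x : Ω) : Measurable (walk x : (ℕ → Ω) → ℕ → Ω) := by
  refine measurable_pi_lambda _ fun n => ?_
  unfold walk
  fun_prop

lemma walk_cons {Ω : Type*} [AddCommGroup Ω] (x z : Ω) (ξ : ℕ → Ω) (n : ℕ) :
    walk x (consSeq (z, ξ)) (n+1) = walk (x + z) ξ n := by
  simp only [walk, Finset.sum_range_succ', consSeq]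
  abel

lemma walk_zero {Ω : Type*} [AddCommGroup Ω] (x : Ω) (ξ : ℕ → Ω) : walk x ξ 0 = x := by
  simp [walk]

/-- first step analysis -/
lemma first_step {Ω : Type*} [AddCommGroup Ω] [Countable Ω] [MeasurableSpace Ω]
    [MeasurableSingletonClass Ω] (W : RandomWalk Ω) (x : Ω) (θ θ' : Set (ℕ → Ω))
    (hθ : MeasurableSet θ) (hθ' : MeasurableSet θ')
    (h : ∀ s : ℕ → Ω, s 0 = x → (s ∈ θ ↔ (fun n => s (n+1)) ∈ θ')) :
    W.P x θ = ∫⁻ z, W.P (x + z) θ' ∂W.ν := by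
  have := W.probν
  have := W.probμ
  have hm : MeasurableSet {ξ : ℕ → Ω | walk x ξ ∈ θ} := walk_meas x hθ
  unfold RandomWalk.P
  conv_lhs => rw [law_cons W]
  rw [Measure.map_apply consSeq_meas hm, Measure.prod_apply (consSeq_meas hm)]
  refine lintegral_congr fun z => ?_
  congr 1
  ext ξ
  simp only [Set.mem_preimage, Set.mem_ofPred_eq]
  rw [h _ (walk_zero _ _)]
  have : (fun n => walk x (consSeq (z, ξ)) (n+1)) = walk (x+z) ξ := funext fun n => walk_cons x z ξ n
  rw [this]

lemma lt_hitTime {Ω : Type*} (D : Set Ω) (s : ℕ → Ω) (j : ℕ) :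
    (j : ℕ∞) < hitTime D s ↔ ∀ k ≤ j, s k ∉ D := by
  unfold hitTime
  rw [← not_iff_not, not_lt]
  push Not
  constructor
  · intro h
    by_contra! hc
    have : ((j + 1 : ℕ) : ℕ∞) ≤ ⨅ (k : ℕ) (_ : s k ∈ D), (k : ℕ∞) := by
      refine le_iInf₂ fun k hk => ?_
      have : ¬ k ≤ j := fun hkj => hc k hkj hk
      exact_mod_cast (by omega : j + 1 ≤ k)
    have := this.trans h
    have : j + 1 ≤ j := by exact_mod_cast this
    omega
  · rintro ⟨k, hk, hs⟩
    exact (iInf₂_le k hs).trans (by exact_mod_cast hk)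

lemma hitTime_eq {Ω : Type*} (D : Set Ω) (s : ℕ → Ω) (k : ℕ) :
    hitTime D s = k ↔ s k ∈ D ∧ ∀ j < k, s j ∉ D := by
  have h1 := lt_hitTime D s k
  constructor
  · intro h
    have h2 : ∀ j < k, s j ∉ D := fun j hj => by
      have := (lt_hitTime D s j).1 (by rw [h]; exact_mod_cast hj)
      exact this j le_rfl
    refine ⟨?_, h2⟩
    by_contra hc
    have := h1.2 (fun j hj => by
      rcases hj.lt_or_eq with h | rfl
      · exact h2 j h
      · exact hc)
    rw [h] at this
    exact lt_irrefl _ this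
  · rintro ⟨hk, hj⟩
    apply le_antisymm
    · exact iInf₂_le k hk
    · refine le_iInf₂ fun i hi => ?_
      have : ¬ i < k := fun h => hj i h hi
      exact_mod_cast (by omega : k ≤ i)

lemma hit_lt {Ω : Type*} (A C : Set Ω) (s : ℕ → Ω) :
    hitTime A s < hitTime C s ↔ ∃ k, s k ∈ A ∧ ∀ j ≤ k, s j ∉ C := by
  constructor
  · intro h
    obtain ⟨k, hk⟩ := ENat.ne_top_iff_exists.1 h.ne_top
    rw [← hk, lt_hitTime] at h
    exact ⟨k, ((hitTime_eq A s k).1 hk.symm).1, h⟩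
  · rintro ⟨k, hk, h⟩
    exact lt_of_le_of_lt (iInf₂_le k hk) ((lt_hitTime C s k).2 h)

def gEv {Ω : Type*} (D : Set Ω) (y : Ω) (j : ℕ) : Set (ℕ → Ω) :=
  {s | s j = y ∧ ∀ k ≤ j, s k ∈ D}

def hEv {Ω : Type*} (D : Set Ω) (y : Ω) : Set (ℕ → Ω) :=
  {s | ∃ k, (s k ∈ D ∧ ∀ j < k, s j ∉ D) ∧ s k = y}

def sEv {Ω : Type*} (A C : Set Ω) : Set (ℕ → Ω) :=
  {s | ∃ k, s k ∈ A ∧ ∀ j ≤ k, s j ∉ C}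

lemma coord_meas {Ω : Type*} [Countable Ω] [MeasurableSpace Ω]
    [MeasurableSingletonClass Ω] (D : Set Ω) (k : ℕ) : MeasurableSet {s : ℕ → Ω | s k ∈ D} :=
  measurable_pi_apply k (D.to_countable.measurableSet)

variable {Ω : Type*} [AddCommGroup Ω] [Countable Ω] [MeasurableSpace Ω]
    [MeasurableSingletonClass Ω]

omit [AddCommGroup Ω] in
lemma gEv_meas (D : Set Ω) (y : Ω) (j : ℕ) : MeasurableSet (gEv D y j) := by
  have : gEv D y j = {s | s j ∈ ({y} : Set Ω)} ∩ ⋂ k, ⋂ (_ : k ≤ j), {s : ℕ → Ω | s k ∈ D} := by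
    ext s; simp [gEv]
  rw [this]
  exact (coord_meas _ _).inter (MeasurableSet.iInter fun k => MeasurableSet.iInter fun _ => coord_meas _ _)

omit [AddCommGroup Ω] in
lemma hEv_meas (D : Set Ω) (y : Ω) : MeasurableSet (hEv D y) := by
  have : hEv D y = ⋃ k, (({s | s k ∈ D} ∩ ⋂ j, ⋂ (_ : j < k), {s : ℕ → Ω | s j ∈ Dᶜ})
      ∩ {s | s k ∈ ({y} : Set Ω)}) := by
    ext s; simp [hEv]
  rw [this]
  exact MeasurableSet.iUnion fun k => ((coord_meas _ _).inter (MeasurableSet.iInter fun k =>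
    MeasurableSet.iInter fun _ => coord_meas _ _)).inter (coord_meas _ _)

omit [AddCommGroup Ω] in
lemma sEv_meas (A C : Set Ω) : MeasurableSet (sEv A C) := by
  have : sEv A C = ⋃ k, ({s | s k ∈ A} ∩ ⋂ j, ⋂ (_ : j ≤ k), {s : ℕ → Ω | s j ∈ Cᶜ}) := by
    ext s; simp [sEv]
  rw [this]
  exact MeasurableSet.iUnion fun k => ((coord_meas _ _).inter (MeasurableSet.iInter fun k =>
    MeasurableSet.iInter fun _ => coord_meas _ _))

omit [Countable Ω] [MeasurableSingletonClass Ω] in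
lemma P_le_one (W : RandomWalk Ω) (x : Ω) (θ : Set (ℕ → Ω)) : W.P x θ ≤ 1 := by
  have := W.probμ
  exact prob_le_one

omit [Countable Ω] [MeasurableSingletonClass Ω] in
lemma P_one (W : RandomWalk Ω) (x : Ω) (θ : Set (ℕ → Ω)) (h : ∀ s : ℕ → Ω, s 0 = x → s ∈ θ) :
    W.P x θ = 1 := by
  have := W.probμ
  have : {ξ | walk x ξ ∈ θ} = Set.univ := Set.eq_univ_of_forall fun ξ => h _ (walk_zero _ _)
  simp [RandomWalk.P, this]

omit [Countable Ω] [MeasurableSingletonClass Ω] in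
lemma P_zero (W : RandomWalk Ω) (x : Ω) (θ : Set (ℕ → Ω)) (h : ∀ s : ℕ → Ω, s 0 = x → s ∉ θ) :
    W.P x θ = 0 := by
  have : {ξ | walk x ξ ∈ θ} = ∅ := Set.eq_empty_of_forall_notMem fun ξ => h _ (walk_zero _ _)
  simp [RandomWalk.P, this]

/-- truncated Green's function -/
noncomputable def gN (W : RandomWalk Ω) (D : Set Ω) (y : Ω) (N : ℕ) (x : Ω) : ℝ≥0∞ :=
  ∑ j ∈ Finset.range N, W.P x (gEv D y j)

omit [Countable Ω] [MeasurableSingletonClass Ω] in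
lemma G_eq (W : RandomWalk Ω) (D : Set Ω) (x y : Ω) : W.G D x y = ⨆ N, gN W D y N x := by
  unfold RandomWalk.G gN
  rw [ENNReal.tsum_eq_iSup_nat]
  simp only [lt_hitTime, Set.mem_compl_iff, not_not]
  rfl

omit [Countable Ω] [MeasurableSingletonClass Ω] in
lemma gN_mono (W : RandomWalk Ω) (D : Set Ω) (y x : Ω) : Monotone (fun N => gN W D y N x) := by
  intro m n h
  exact Finset.sum_le_sum_of_subset (Finset.range_mono h)

omit [Countable Ω] [MeasurableSingletonClass Ω] in
lemma gN_not_mem (W : RandomWalk Ω) (D : Set Ω) (y x : Ω) (N : ℕ) (hx : x ∉ D) :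
    gN W D y N x = 0 := by
  refine Finset.sum_eq_zero fun j _ => P_zero W x _ ?_
  rintro s rfl ⟨_, h⟩
  exact hx (h 0 (Nat.zero_le _))

omit [Countable Ω] [MeasurableSingletonClass Ω] in
lemma gN_ne_top (W : RandomWalk Ω) (D : Set Ω) (y x : Ω) (N : ℕ) : gN W D y N x ≠ ∞ :=
  (ENNReal.sum_lt_top.2 fun _ _ => (P_le_one W _ _).trans_lt one_lt_top).ne

open Classical in
lemma gN_succ (W : RandomWalk Ω) (D : Set Ω) (y x : Ω) (N : ℕ) (hx : x ∈ D) :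
    gN W D y (N+1) x = ∫⁻ z, gN W D y N (x+z) ∂W.ν + if x = y then 1 else 0 := by
  unfold gN
  rw [Finset.sum_range_succ', lintegral_finsetSum _ (fun _ _ => Measurable.of_discrete)]
  congr 1
  · refine Finset.sum_congr rfl fun j _ => ?_
    refine first_step W x _ _ (gEv_meas _ _ _) (gEv_meas _ _ _) ?_
    rintro s rfl
    simp only [gEv, Set.mem_ofPred_eq]
    refine and_congr_right fun _ => ⟨fun h k hk => h _ (by omega), fun h k hk => ?_⟩
    cases k with
    | zero => exact hx
    | succ k => exact h k (by omega)
  · split_ifs with h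
    · refine P_one W x _ ?_
      rintro s rfl
      refine ⟨h, fun k hk => ?_⟩
      obtain rfl : k = 0 := by omega
      exact hx
    · refine P_zero W x _ ?_
      rintro s rfl ⟨h', _⟩
      exact h h'

lemma sig_step (W : RandomWalk Ω) (A C : Set Ω) (x : Ω) (hA : x ∉ A) (hC : x ∉ C) :
    W.P x (sEv A C) = ∫⁻ z, W.P (x+z) (sEv A C) ∂W.ν := by
  refine first_step W x _ _ (sEv_meas _ _) (sEv_meas _ _) ?_
  rintro s rfl
  constructor
  · rintro ⟨k, hk, h⟩
    cases k with
    | zero => exact absurd hk hA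
    | succ k => exact ⟨k, hk, fun j hj => h _ (by omega)⟩
  · rintro ⟨k, hk, h⟩
    refine ⟨k+1, hk, fun j hj => ?_⟩
    cases j with
    | zero => exact hC
    | succ j => exact h j (by omega)

lemma H_step (W : RandomWalk Ω) (D : Set Ω) (x y : Ω) (hD : x ∉ D) :
    W.P x (hEv D y) = ∫⁻ z, W.P (x+z) (hEv D y) ∂W.ν := by
  refine first_step W x _ _ (hEv_meas _ _) (hEv_meas _ _) ?_
  rintro s rfl
  constructor
  · rintro ⟨k, ⟨hk, h⟩, e⟩
    cases k with
    | zero => exact absurd hk hD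
    | succ k => exact ⟨k, ⟨hk, fun j hj => h _ (by omega)⟩, e⟩
  · rintro ⟨k, ⟨hk, h⟩, e⟩
    refine ⟨k+1, ⟨hk, fun j hj => ?_⟩, e⟩
    cases j with
    | zero => exact hD
    | succ j => exact h j (by omega)

lemma claim1 (W : RandomWalk Ω) (D : Set Ω) (y : Ω) (N : ℕ) :
    ∀ n ≤ N, ∀ x, gN W D y n x ≤ gN W D y N y := by
  have := W.probν
  intro n
  induction n with
  | zero => intro _ x; simp [gN]
  | succ n ih =>
    intro hn x
    by_cases hx : x ∈ D
    · by_cases hxy : x = y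
      · subst hxy; exact gN_mono W D x x hn
      · rw [gN_succ W D y x n hx, if_neg hxy, add_zero]
        refine (lintegral_mono fun z => ih (by omega) (x+z)).trans ?_
        simp
    · rw [gN_not_mem W D y x _ hx]; exact zero_le

lemma claim2 (W : RandomWalk Ω) (A B C : Set Ω)
    (hAC : Disjoint A C)
    (hBC : Disjoint B C) (y : Ω) (hy : y ∈ A) (N : ℕ) :
    ∀ n ≤ N, ∀ x, gN W (A ∪ B) y n x ≤ gN W (A ∪ B) y N y * W.P x (sEv A C) := by
  intro n
  induction n with
  | zero => intro _ x; simp [gN]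
  | succ n ih =>
    intro hn x
    by_cases hA : x ∈ A
    · rw [P_one W x (sEv A C), mul_one]
      · exact claim1 W _ y N _ hn x
      · rintro s rfl
        refine ⟨0, hA, fun j hj => ?_⟩
        obtain rfl : j = 0 := by omega
        exact Set.disjoint_left.1 hAC hA
    · by_cases hB : x ∈ B
      · have hC := Set.disjoint_left.1 hBC hB
        have hxy : x ≠ y := fun h => hA (h ▸ hy)
        rw [gN_succ W _ y x n (Or.inr hB), if_neg hxy, add_zero, sig_step W A C x hA hC,
            ← lintegral_const_mul _ Measurable.of_discrete]
        exact lintegral_mono fun z => ih (by omega) (x+z)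
      · rw [gN_not_mem W _ y x _ (by simp [hA, hB])]; exact zero_le

lemma claim3 (W : RandomWalk Ω) (A B C : Set Ω)
    (hAB : Disjoint A B) (hAC : Disjoint A C)
    (hBC : Disjoint B C) (y : Ω) (hy : y ∈ A) (N : ℕ) :
    ∀ n ≤ N, ∀ x, gN W (A ∪ B) y n x ≤ gN W A y n x + gN W (A ∪ B) y N y *
      ∑' b : B, W.P x (hEv (B ∪ C) (b : Ω)) * W.P b (sEv A C) := by
  intro n
  induction n with
  | zero => intro _ x; simp [gN]
  | succ n ih =>
    intro hn x
    by_cases hA : x ∈ A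
    · have hBC' : x ∉ B ∪ C := by
        rintro (h | h)
        · exact Set.disjoint_left.1 hAB hA h
        · exact Set.disjoint_left.1 hAC hA h
      have hsum : ∑' b : B, W.P x (hEv (B ∪ C) (b : Ω)) * W.P b (sEv A C)
          = ∫⁻ z, ∑' b : B, W.P (x+z) (hEv (B ∪ C) (b : Ω)) * W.P b (sEv A C) ∂W.ν := by
        rw [lintegral_tsum fun _ => Measurable.of_discrete.aemeasurable]
        refine tsum_congr fun b => ?_
        rw [lintegral_mul_const _ Measurable.of_discrete, H_step W _ x _ hBC']
      rw [gN_succ W _ y x n (Or.inl hA), gN_succ W _ y x n hA, hsum,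
        ← lintegral_const_mul _ Measurable.of_discrete, add_right_comm,
        ← lintegral_add_left Measurable.of_discrete]
      gcongr with z
      exact ih (by omega) (x+z)
    · by_cases hB : x ∈ B
      · refine le_add_left ((claim2 W A B C hAC hBC y hy N _ hn x).trans ?_)
        gcongr
        refine le_trans ?_ (ENNReal.le_tsum (⟨x, hB⟩ : B))
        rw [P_one W x (hEv (B ∪ C) x), one_mul]
        rintro s rfl
        exact ⟨0, ⟨Or.inl hB, fun j hj => absurd hj (by omega)⟩, rfl⟩
      · rw [gN_not_mem W _ y x _ (by simp [hA, hB])]; exact zero_le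

end aux

/-- Proposition 1, part (a): for `a, a' ∈ A` with `ρ_{a'} < 1`,
`G_A(a,a') ≤ G_{A∪B}(a,a') ≤ G_A(a,a') + (ρ_a/(1-ρ_{a'})) G_A(a',a')`. -/
theorem prop1a
    {Ω : Type*} [AddCommGroup Ω] [Countable Ω] [MeasurableSpace Ω]
    [MeasurableSingletonClass Ω] (W : RandomWalk Ω) (A B C : Set Ω)
    (hcover : A ∪ B ∪ C = Set.univ) (hAB : Disjoint A B) (hAC : Disjoint A C)
    (hBC : Disjoint B C) (a a' : Ω) (ha : a ∈ A) (ha' : a' ∈ A)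
    (ρ : Ω → ℝ≥0∞)
    (hρdef : ∀ x, ρ x = ∑' b' : B,
      W.H (B ∪ C) x b' * W.P b' {s | hitTime A s < hitTime C s})
    (hρ : ρ a' < 1) :
    W.G A a a' ≤ W.G (A ∪ B) a a' ∧
      W.G (A ∪ B) a a' ≤ W.G A a a' + (ρ a / (1 - ρ a')) * W.G A a' a' := by
  have hρ2 : ∀ x, ρ x = ∑' b : B, W.P x (hEv (B ∪ C) (b : Ω)) * W.P b (sEv A C) := by
    intro x
    rw [hρdef]
    simp only [RandomWalk.H, hitTime_eq, hit_lt]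
    rfl
  have key : ∀ N x, gN W (A ∪ B) a' N x ≤ gN W A a' N x + gN W (A ∪ B) a' N a' * ρ x := by
    intro N x
    rw [hρ2]
    exact claim3 W A B C hAB hAC hBC a' ha' N N le_rfl x
  have hne0 : 1 - ρ a' ≠ 0 := (tsub_pos_of_lt hρ).ne'
  have hnet : 1 - ρ a' ≠ ∞ := ENNReal.sub_ne_top one_ne_top
  have hg : ∀ N, gN W (A ∪ B) a' N a' ≤ W.G A a' a' / (1 - ρ a') := by
    intro N
    rw [ENNReal.le_div_iff_mul_le (Or.inl hne0) (Or.inl hnet)]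
    have hfin : gN W (A ∪ B) a' N a' ≠ ∞ := gN_ne_top W _ _ _ _
    rw [ENNReal.mul_sub (fun _ _ => hfin), mul_one]
    refine tsub_le_iff_right.2 ((key N a').trans ?_)
    gcongr
    rw [G_eq]
    exact le_iSup (fun N => gN W A a' N a') N
  refine ⟨?_, ?_⟩
  · refine ENNReal.tsum_le_tsum fun j => measure_mono fun ξ hξ => ⟨hξ.1, ?_⟩
    have h2 := (lt_hitTime _ _ _).1 hξ.2
    exact (lt_hitTime _ _ _).2 fun k hk h => h2 k hk fun h' => h (Or.inl h')
  · rw [G_eq W (A ∪ B)]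
    refine iSup_le fun N => (key N a).trans ?_
    refine add_le_add ?_ ?_
    · rw [G_eq]
      exact le_iSup (fun N => gN W A a' N a) N
    · refine (mul_le_mul_left (hg N) _).trans (le_of_eq ?_)
      simp only [div_eq_mul_inv]
      ring
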